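/- Let G = (V, E) be a finite simple graph and let m be a partition scheme in G. Then P_G(q) = q^{|V|} · Σ_{F ∈ F^m_G} (-1/q)^{|F|}, where F^m_G consists of the empty forest together with all forests F ⊆ E each of whose nontrivial tree components τ satisfies m(τ) = τ. -/

import Mathlib

/-!
Inclusion–exclusion over monochromatic edges (`card_coloring_eq`) writes the number of proper
`q`-colourings as the sum over all `A ⊆ E` of `(-1)^|A| N(A)`, where `N(A)` (`monoCount`) counts the
colourings constant on every edge of `A`; thus `N(A)` is `q` to the number of components of `(V, A)`.

A partition scheme partitions the connected spanning subgraphs of each `G|_R` into Boolean intervals.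
Applying it to each component separately partitions all subsets of `E` into the intervals
`[F, top m F]`, one for each forest `F`, where `top m F` is the union of the sets `m τ` over the
nontrivial components `τ` of `F`. That each `A ⊆ E` lies in exactly one of them is the content of
`interval_exists` and `interval_subset`. On such an interval the components, and hence `N`, are
constant (`monoCount_interval`), so the interval contributes `N(F)` times the alternating sum of
`(-1)^|A|`. This is `0` unless `top m F = F`, which says that `m τ = τ` for every nontrivial
component `τ` of `F` (`top_eq_iff`). Finally `N(F) = q^(|V| - |F|)` for a forest
(`IsForest.monoCount_mul`), because adding an edge between two components divides `N` by `q`.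
-/

open scoped Classical

namespace BC

variable {V : Type*}

/-- The set of vertices incident to at least one edge of `τ`. -/
noncomputable def supp [Fintype V] (τ : Finset (Sym2 V)) : Finset V :=
  Finset.univ.filter (fun v => ∃ e ∈ τ, v ∈ e)

/-- The graph on vertex set `R` with edge set `F` is connected. -/
def ConnOn (R : Finset V) (F : Finset (Sym2 V)) : Prop :=
  (SimpleGraph.induce (R : Set V) (SimpleGraph.fromEdgeSet (F : Set (Sym2 V)))).Connected

/-- Edges of `G` with both endpoints in `R` (edge set of the induced subgraph `G|_R`). -/
noncomputable def edgesIn [Fintype V] [DecidableEq V] (G : SimpleGraph V) [DecidableRel G.Adj]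
    (R : Finset V) : Finset (Sym2 V) :=
  G.edgeFinset.filter (fun e => ∀ v ∈ e, v ∈ R)

/-- `g` is (the edge set of) a connected spanning subgraph of `G|_R`. -/
def IsCSS [Fintype V] [DecidableEq V] (G : SimpleGraph V) [DecidableRel G.Adj]
    (R : Finset V) (g : Finset (Sym2 V)) : Prop :=
  g ⊆ edgesIn G R ∧ ConnOn R g

/-- `τ` is (the edge set of) a spanning tree of `G|_R`. -/
def IsSpanningTree [Fintype V] [DecidableEq V] (G : SimpleGraph V) [DecidableRel G.Adj]
    (R : Finset V) (τ : Finset (Sym2 V)) : Prop :=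
  IsCSS G R τ ∧ τ.card = R.card - 1

/-- A forest: an edge set containing no cycle. -/
def IsForest (F : Finset (Sym2 V)) : Prop :=
  (SimpleGraph.fromEdgeSet (F : Set (Sym2 V))).IsAcyclic

/-- `τ` is the edge set of a nontrivial tree component of the forest `F`. -/
def IsTreeComponent [Fintype V] (F τ : Finset (Sym2 V)) : Prop :=
  τ ⊆ F ∧ τ.Nonempty ∧ ConnOn (supp τ) τ ∧ ∀ e ∈ F \ τ, ∀ v ∈ e, v ∉ supp τ

/-- `C` is the edge set of a simple circuit (cycle) of `G`. -/
def IsCircuit (G : SimpleGraph V) (C : Finset (Sym2 V)) : Prop :=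
  ∃ (v : V) (w : G.Walk v v), w.IsCycle ∧ w.edges.toFinset = C

/-- `B` is a broken circuit of `G`: a simple circuit minus its maximal edge. -/
def IsBrokenCircuit [LinearOrder (Sym2 V)] (G : SimpleGraph V) (B : Finset (Sym2 V)) : Prop :=
  ∃ C e, IsCircuit G C ∧ e ∈ C ∧ (∀ f ∈ C, f ≤ e) ∧ B = C.erase e

/-- `m` is a partition scheme in `G`. -/
def IsPartitionScheme [Fintype V] [DecidableEq V] (G : SimpleGraph V) [DecidableRel G.Adj]
    (m : Finset (Sym2 V) → Finset (Sym2 V)) : Prop :=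
  ∀ R : Finset V, 2 ≤ R.card → ConnOn R (edgesIn G R) →
    (∀ τ, IsSpanningTree G R τ → τ ⊆ m τ ∧ IsCSS G R (m τ)) ∧
    (∀ g, IsCSS G R g → ∃! τ, IsSpanningTree G R τ ∧ τ ⊆ g ∧ g ⊆ m τ)

/-- The minimal-tree partition scheme: `μ(τ)` adds to `τ` every edge `{x,y}` of `G|_R`
larger than all the edges on the path in `τ` from `x` to `y`. -/
noncomputable def mu [Fintype V] [DecidableEq V] (G : SimpleGraph V) [DecidableRel G.Adj]
    [LinearOrder (Sym2 V)] (R : Finset V) (τ : Finset (Sym2 V)) : Finset (Sym2 V) :=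
  τ ∪ (edgesIn G R).filter (fun e => e ∉ τ ∧ ∀ x y : V, e = s(x, y) →
    ∀ p : (SimpleGraph.fromEdgeSet (τ : Set (Sym2 V))).Walk x y, p.IsPath → ∀ f ∈ p.edges, f < e)

/-- All unordered pairs of distinct elements of `R`. -/
noncomputable def allPairs [DecidableEq V] (R : Finset V) : Finset (Sym2 V) :=
  ((R ×ˢ R).filter (fun p => p.1 ≠ p.2)).image (fun p => s(p.1, p.2))

/-- `f` takes the same value at the two endpoints of `e`. -/
def eqOn (f : V → ℕ) (e : Sym2 V) : Prop :=
  Sym2.lift ⟨fun x y => f x = f y, fun x y => propext ⟨Eq.symm, Eq.symm⟩⟩ e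

/-! ### Reachability and connectedness of edge sets -/

/-- A vertex property that passes along the edges of `F` passes to every vertex reachable in `F`. -/
theorem reach_closed {F : Finset (Sym2 V)} {P : V → Prop}
    (hP : ∀ a b, s(a, b) ∈ F → P a → P b) {x y : V}
    (h : (SimpleGraph.fromEdgeSet (F : Set (Sym2 V))).Reachable x y) (hx : P x) : P y := by
  obtain ⟨w⟩ := h
  induction w with
  | nil => exact hx
  | cons hadj _ ih =>
    rw [SimpleGraph.fromEdgeSet_adj] at hadj
    exact ih (hP _ _ (by exact_mod_cast hadj.1) hx)

theorem adj_mem {F : Finset (Sym2 V)} {x y : V}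
    (h : (SimpleGraph.fromEdgeSet (F : Set (Sym2 V))).Adj x y) : s(x, y) ∈ F := by
  rw [SimpleGraph.fromEdgeSet_adj] at h
  exact_mod_cast h.1

theorem adj_of_mem {F : Finset (Sym2 V)} {x y : V} (h : s(x, y) ∈ F) (hne : x ≠ y) :
    (SimpleGraph.fromEdgeSet (F : Set (Sym2 V))).Adj x y := by
  rw [SimpleGraph.fromEdgeSet_adj]
  exact ⟨by exact_mod_cast h, hne⟩

theorem graph_mono {F F' : Finset (Sym2 V)} (h : F ⊆ F') :
    SimpleGraph.fromEdgeSet (F : Set (Sym2 V)) ≤ SimpleGraph.fromEdgeSet (F' : Set (Sym2 V)) :=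
  SimpleGraph.fromEdgeSet_mono (by exact_mod_cast h)

theorem IsForest.subset {F F' : Finset (Sym2 V)} (h : IsForest F') (hs : F ⊆ F') : IsForest F :=
  SimpleGraph.IsAcyclic.anti (graph_mono hs) h

theorem ConnOn.mono {R : Finset V} {F F' : Finset (Sym2 V)} (h : F ⊆ F') (hc : ConnOn R F) :
    ConnOn R F' := by
  unfold ConnOn at *
  refine SimpleGraph.Connected.mono ?_ hc
  intro a b hab
  exact graph_mono h hab

theorem ConnOn.reachable {R : Finset V} {F : Finset (Sym2 V)} (hc : ConnOn R F) {x y : V}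
    (hx : x ∈ R) (hy : y ∈ R) :
    (SimpleGraph.fromEdgeSet (F : Set (Sym2 V))).Reachable x y := by
  have := hc.preconnected ⟨x, by exact_mod_cast hx⟩ ⟨y, by exact_mod_cast hy⟩
  exact this.map (SimpleGraph.Embedding.induce (R : Set V)).toHom

/-- If the edges of `F` have their endpoints in `R`, a walk in `F` from a vertex of `R` stays in `R`,
so reachability in `(V, F)` is reachability in the induced graph on `R`. -/
theorem connOn_of_reachable {R : Finset V} {F : Finset (Sym2 V)}
    (hF : ∀ e ∈ F, ∀ v ∈ e, v ∈ R) {x : V} (hx : x ∈ R)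
    (h : ∀ y ∈ R, (SimpleGraph.fromEdgeSet (F : Set (Sym2 V))).Reachable x y) : ConnOn R F := by
  unfold ConnOn
  rw [SimpleGraph.connected_iff_exists_forall_reachable]
  refine ⟨⟨x, by exact_mod_cast hx⟩, ?_⟩
  rintro ⟨y, hy⟩
  obtain ⟨w⟩ := h y (by exact_mod_cast hy)
  have hs : ∀ u ∈ w.support, u ∈ (R : Set V) := by
    intro u hu
    have : u ∈ R := reach_closed (P := fun u => u ∈ R)
      (fun a b hab _ => hF _ hab b (Sym2.mem_mk_right a b)) (w.takeUntil u hu).reachable hx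
    exact_mod_cast this
  exact (w.induce _ hs).reachable

section

/-! ### Nontrivial components of an edge set -/

variable [Fintype V]

theorem mem_supp {τ : Finset (Sym2 V)} {v : V} : v ∈ supp τ ↔ ∃ e ∈ τ, v ∈ e := by
  simp [supp]

theorem left_mem_supp {τ : Finset (Sym2 V)} {x y : V} (h : s(x, y) ∈ τ) : x ∈ supp τ :=
  mem_supp.2 ⟨_, h, Sym2.mem_mk_left x y⟩

theorem right_mem_supp {τ : Finset (Sym2 V)} {x y : V} (h : s(x, y) ∈ τ) : y ∈ supp τ :=
  mem_supp.2 ⟨_, h, Sym2.mem_mk_right x y⟩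

theorem isTreeComponent_of {F τ : Finset (Sym2 V)} (h₁ : τ ⊆ F) (h₂ : τ.Nonempty)
    (h₃ : ConnOn (supp τ) τ) (h₄ : ∀ e ∈ F, e ∉ τ → ∀ v ∈ e, v ∉ supp τ) :
    IsTreeComponent F τ :=
  ⟨h₁, h₂, h₃, fun e he => h₄ e (Finset.mem_sdiff.1 he).1 (Finset.mem_sdiff.1 he).2⟩

theorem IsTreeComponent.mem_of_mem_supp {F τ : Finset (Sym2 V)} (h : IsTreeComponent F τ)
    {e : Sym2 V} (he : e ∈ F) {v : V} (hv : v ∈ e) (hs : v ∈ supp τ) : e ∈ τ := by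
  by_contra hne
  exact h.2.2.2 e (Finset.mem_sdiff.2 ⟨he, hne⟩) v hv hs

/-- By connectedness of `κ`, a component `κ'` meeting `supp κ` contains every vertex of `supp κ`.
No acyclicity is used: `IsTreeComponent` describes the nontrivial components of any edge set. -/
theorem IsTreeComponent.subset_of_meet {F κ κ' : Finset (Sym2 V)} (h : IsTreeComponent F κ)
    (h' : IsTreeComponent F κ') {v : V} (hv : v ∈ supp κ) (hv' : v ∈ supp κ') : κ ⊆ κ' := by
  have key : ∀ u ∈ supp κ, u ∈ supp κ' := by
    intro u hu
    refine reach_closed (P := fun u => u ∈ supp κ') ?_ (h.2.2.1.reachable hv hu) hv'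
    intro a b hab ha
    exact right_mem_supp (h'.mem_of_mem_supp (h.1 hab) (Sym2.mem_mk_left a b) ha)
  intro e he
  induction e with
  | h a b =>
    exact h'.mem_of_mem_supp (h.1 he) (Sym2.mem_mk_left a b) (key a (left_mem_supp he))

theorem IsTreeComponent.eq_of_meet {F κ κ' : Finset (Sym2 V)} (h : IsTreeComponent F κ)
    (h' : IsTreeComponent F κ') {v : V} (hv : v ∈ supp κ) (hv' : v ∈ supp κ') : κ = κ' :=
  (h.subset_of_meet h' hv hv').antisymm (h'.subset_of_meet h hv' hv)

theorem mem_supp_of_mem {τ : Finset (Sym2 V)} {e : Sym2 V} (he : e ∈ τ) :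
    ∃ v ∈ e, v ∈ supp τ := by
  induction e with
  | h a b => exact ⟨a, Sym2.mem_mk_left a b, left_mem_supp he⟩

theorem IsTreeComponent.eq_of_mem {F κ κ' : Finset (Sym2 V)} (h : IsTreeComponent F κ)
    (h' : IsTreeComponent F κ') {e : Sym2 V} (he : e ∈ κ) (he' : e ∈ κ') : κ = κ' := by
  obtain ⟨v, hv, hs⟩ := mem_supp_of_mem he
  exact h.eq_of_meet h' hs (mem_supp.2 ⟨e, he', hv⟩)

/-- Every edge of `A` lies in a component: take all edges reachable in `A` from its first endpoint. -/
theorem exists_component {A : Finset (Sym2 V)} {e : Sym2 V} (he : e ∈ A) :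
    ∃ κ, IsTreeComponent A κ ∧ e ∈ κ := by
  induction e with
  | h x y =>
  set r := SimpleGraph.fromEdgeSet (A : Set (Sym2 V)) with hr
  have step : ∀ a b, s(a, b) ∈ A → r.Reachable x a → r.Reachable x b := by
    intro a b hab ha
    by_cases hne : a = b
    · exact hne ▸ ha
    · exact ha.trans (adj_of_mem hab hne).reachable
  set κ := A.filter (fun f => ∀ v ∈ f, r.Reachable x v) with hκ
  have mem_κ : ∀ a b, s(a, b) ∈ A → r.Reachable x a → s(a, b) ∈ κ := by
    intro a b hab ha
    refine Finset.mem_filter.2 ⟨hab, fun v hv => ?_⟩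
    rcases Sym2.mem_iff.1 hv with rfl | rfl
    · exact ha
    · exact step _ _ hab ha
  have hxy : s(x, y) ∈ κ := mem_κ x y he (SimpleGraph.Reachable.refl x)
  have supp_reach : ∀ v ∈ supp κ, r.Reachable x v := by
    intro v hv
    obtain ⟨f, hf, hvf⟩ := mem_supp.1 hv
    exact (Finset.mem_filter.1 hf).2 v hvf
  refine ⟨κ, ⟨Finset.filter_subset _ _, ⟨_, hxy⟩, ?_, ?_⟩, hxy⟩
  · refine connOn_of_reachable (fun f hf v hv => mem_supp.2 ⟨f, hf, hv⟩) (left_mem_supp hxy) ?_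
    intro v hv
    -- Reachability inside `A` is carried step by step into `κ`.
    refine (reach_closed (F := A) (P := fun u => r.Reachable x u ∧
      (SimpleGraph.fromEdgeSet (κ : Set (Sym2 V))).Reachable x u) ?_ (supp_reach v hv)
      ⟨SimpleGraph.Reachable.refl x, SimpleGraph.Reachable.refl x⟩).2
    rintro a b hab ⟨ha, ha'⟩
    refine ⟨step a b hab ha, ?_⟩
    by_cases hne : a = b
    · exact hne ▸ ha'
    · exact ha'.trans (adj_of_mem (mem_κ a b hab ha) hne).reachable
  · intro f hf v hv hs
    obtain ⟨hfA, hfκ⟩ := Finset.mem_sdiff.1 hf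
    obtain ⟨b, rfl⟩ := Sym2.mem_iff_exists.1 hv
    exact hfκ (mem_κ v b hfA (supp_reach v hs))

/-- A cycle of `F` stays in one component. -/
theorem isForest_of_components {F : Finset (Sym2 V)}
    (h : ∀ τ, IsTreeComponent F τ → IsForest τ) : IsForest F := by
  intro v c hc
  have hadj := c.adj_snd hc.not_nil
  obtain ⟨τ, hτ, he⟩ := exists_component (adj_mem hadj)
  have hsupp : ∀ u ∈ c.support, u ∈ supp τ := by
    intro u hu
    refine reach_closed (P := fun u => u ∈ supp τ) ?_ (c.takeUntil u hu).reachable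
      (left_mem_supp he)
    intro a b hab ha
    exact right_mem_supp (hτ.mem_of_mem_supp hab (Sym2.mem_mk_left a b) ha)
  have hedges : ∀ e ∈ c.edges, e ∈ (SimpleGraph.fromEdgeSet (τ : Set (Sym2 V))).edgeSet := by
    intro e
    induction e with
    | h a b =>
      intro hab
      have hadj' := c.adj_of_mem_edges hab
      exact adj_of_mem (hτ.mem_of_mem_supp (adj_mem hadj') (Sym2.mem_mk_left a b)
        (hsupp a (c.fst_mem_support_of_mem_edges hab))) hadj'.ne
  exact h τ hτ _ (hc.transfer hedges)

/-! ### Spanning trees -/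

variable [DecidableEq V] {G : SimpleGraph V} [DecidableRel G.Adj]

theorem mem_edgesIn {R : Finset V} {e : Sym2 V} :
    e ∈ edgesIn G R ↔ e ∈ G.edgeFinset ∧ ∀ v ∈ e, v ∈ R := by
  simp [edgesIn]

omit [DecidableEq V] in
theorem ne_of_mem {A : Finset (Sym2 V)} (hA : A ⊆ G.edgeFinset) {a b : V} (h : s(a, b) ∈ A) :
    a ≠ b := by
  have := hA h
  rw [SimpleGraph.mem_edgeFinset, SimpleGraph.mem_edgeSet] at this
  exact this.ne

/-- Among connected spanning subgraphs, the edge count `|R| - 1` is equivalent to acyclicity. -/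
theorem isSpanningTree_iff {R : Finset V} {τ : Finset (Sym2 V)} :
    IsSpanningTree G R τ ↔ IsCSS G R τ ∧ IsForest τ := by
  refine and_congr_right fun hcss => ?_
  have hE : τ ⊆ G.edgeFinset := fun e he => (mem_edgesIn.1 (hcss.1 he)).1
  have hR : ∀ e ∈ τ, ∀ v ∈ e, v ∈ R := fun e he => (mem_edgesIn.1 (hcss.1 he)).2
  set H := SimpleGraph.induce (R : Set V) (SimpleGraph.fromEdgeSet (τ : Set (Sym2 V))) with hH
  have hconn : H.Connected := hcss.2
  have hcard : Nat.card H.edgeSet = τ.card := by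
    rw [Nat.card_coe_set_eq, ← Set.ncard_coe_finset τ,
      ← Set.ncard_image_of_injective H.edgeSet (Sym2.map.injective Subtype.val_injective)]
    congr 1
    ext e
    constructor
    · rintro ⟨f, hf, rfl⟩
      induction f with
      | h a b => exact_mod_cast adj_mem (hf : (SimpleGraph.fromEdgeSet (τ : Set (Sym2 V))).Adj a b)
    · induction e with
      | h a b =>
        intro hab
        have hab' : s(a, b) ∈ τ := by exact_mod_cast hab
        refine ⟨s(⟨a, by exact_mod_cast hR _ hab' a (Sym2.mem_mk_left a b)⟩,
          ⟨b, by exact_mod_cast hR _ hab' b (Sym2.mem_mk_right a b)⟩), ?_, by simp⟩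
        exact adj_of_mem hab' (ne_of_mem hE hab')
  have hcardR : Nat.card (R : Set V) = R.card := by simp
  have hpos : 0 < R.card := by
    obtain ⟨⟨x, hx⟩⟩ := hconn.nonempty
    exact Finset.card_pos.2 ⟨x, by exact_mod_cast hx⟩
  have htree : H.IsTree ↔ τ.card = R.card - 1 := by
    rw [SimpleGraph.isTree_iff_connected_and_card, hcard, hcardR]
    constructor
    · rintro ⟨-, h⟩; omega
    · intro h; exact ⟨hconn, by omega⟩
  rw [← htree]
  constructor
  · intro h v c hc
    have hadj := c.adj_snd hc.not_nil
    have hv : v ∈ R := hR _ (adj_mem hadj) v (Sym2.mem_mk_left _ _)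
    have hs : ∀ u ∈ c.support, u ∈ (R : Set V) := by
      intro u hu
      have : u ∈ R := reach_closed (P := fun u => u ∈ R)
        (fun a b hab _ => hR _ hab b (Sym2.mem_mk_right a b)) (c.takeUntil u hu).reachable hv
      exact_mod_cast this
    refine h.isAcyclic (c.induce _ hs) ?_
    rw [← SimpleGraph.Walk.isCycle_map_iff_of_injective
      (f := (SimpleGraph.Embedding.induce (R : Set V)).toHom) Subtype.val_injective]
    rw [SimpleGraph.Walk.map_induce]
    exact hc
  · intro h
    exact ⟨hconn, SimpleGraph.IsAcyclic.induce h _⟩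

omit [DecidableEq V] in
theorem two_le_card_supp {τ : Finset (Sym2 V)} (hE : τ ⊆ G.edgeFinset) (h : τ.Nonempty) :
    2 ≤ (supp τ).card := by
  obtain ⟨e, he⟩ := h
  induction e with
  | h a b =>
    exact Finset.one_lt_card.2 ⟨a, left_mem_supp he, b, right_mem_supp he, ne_of_mem hE he⟩

theorem subset_edgesIn_supp {τ : Finset (Sym2 V)} (hE : τ ⊆ G.edgeFinset) :
    τ ⊆ edgesIn G (supp τ) :=
  fun e he => mem_edgesIn.2 ⟨hE he, fun _ hv => mem_supp.2 ⟨e, he, hv⟩⟩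

theorem IsTreeComponent.isCSS {A κ : Finset (Sym2 V)} (hA : A ⊆ G.edgeFinset)
    (h : IsTreeComponent A κ) : IsCSS G (supp κ) κ :=
  ⟨subset_edgesIn_supp (h.1.trans hA), h.2.2.1⟩

theorem supp_eq_of_isCSS {R : Finset V} (hR : 2 ≤ R.card) {τ : Finset (Sym2 V)}
    (h : IsCSS G R τ) : supp τ = R := by
  ext v
  constructor
  · intro hv
    obtain ⟨e, he, hve⟩ := mem_supp.1 hv
    exact (mem_edgesIn.1 (h.1 he)).2 v hve
  · intro hv
    obtain ⟨u, hu, hne⟩ := Finset.exists_mem_ne (by omega : 1 < R.card) v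
    obtain ⟨w⟩ := h.2.reachable hv hu
    have hnil : ¬ w.Nil := SimpleGraph.Walk.not_nil_of_ne hne.symm
    exact left_mem_supp (adj_mem (w.adj_snd hnil))

/-! ### The Boolean intervals of a partition scheme -/

variable {m : Finset (Sym2 V) → Finset (Sym2 V)}

/-- A component `τ` of a forest is a spanning tree of its support, so the scheme applies to it. -/
theorem scheme_tree (hm : IsPartitionScheme G m) {F τ : Finset (Sym2 V)} (hE : F ⊆ G.edgeFinset)
    (hF : IsForest F) (h : IsTreeComponent F τ) : τ ⊆ m τ ∧ IsCSS G (supp τ) (m τ) :=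
  (hm (supp τ) (two_le_card_supp (h.1.trans hE) h.2.1)
    (h.2.2.1.mono (subset_edgesIn_supp (h.1.trans hE)))).1 τ
    (isSpanningTree_iff.2 ⟨h.isCSS hE, hF.subset h.1⟩)

/-- Every component of an edge set lies in exactly one interval `[τ, m τ]` of the scheme. -/
theorem scheme_existsUnique (hm : IsPartitionScheme G m) {A κ : Finset (Sym2 V)}
    (hE : A ⊆ G.edgeFinset) (h : IsTreeComponent A κ) :
    ∃! τ, IsSpanningTree G (supp κ) τ ∧ τ ⊆ κ ∧ κ ⊆ m τ :=
  (hm (supp κ) (two_le_card_supp (h.1.trans hE) h.2.1)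
    (h.2.2.1.mono (subset_edgesIn_supp (h.1.trans hE)))).2 κ (h.isCSS hE)

/-- The top of the Boolean interval attached to the forest `F`: the union of the edge sets `m τ`
over the nontrivial components `τ` of `F`. -/
noncomputable def top (m : Finset (Sym2 V) → Finset (Sym2 V)) (F : Finset (Sym2 V)) :
    Finset (Sym2 V) :=
  (Finset.univ.filter (fun τ => IsTreeComponent F τ)).biUnion m

theorem mem_top {F : Finset (Sym2 V)} {e : Sym2 V} :
    e ∈ top m F ↔ ∃ τ, IsTreeComponent F τ ∧ e ∈ m τ := by
  simp [top]

theorem subset_top (hm : IsPartitionScheme G m) {F : Finset (Sym2 V)} (hE : F ⊆ G.edgeFinset)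
    (hF : IsForest F) : F ⊆ top m F := by
  intro e he
  obtain ⟨τ, hτ, heτ⟩ := exists_component he
  exact mem_top.2 ⟨τ, hτ, (scheme_tree hm hE hF hτ).1 heτ⟩

theorem top_subset (hm : IsPartitionScheme G m) {F : Finset (Sym2 V)} (hE : F ⊆ G.edgeFinset)
    (hF : IsForest F) : top m F ⊆ G.edgeFinset := by
  intro e he
  obtain ⟨τ, hτ, heτ⟩ := mem_top.1 he
  exact (mem_edgesIn.1 ((scheme_tree hm hE hF hτ).2.1 heτ)).1

theorem mem_component_of_mem_scheme (hm : IsPartitionScheme G m) {F τ : Finset (Sym2 V)}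
    (hE : F ⊆ G.edgeFinset) (hF : IsForest F) (hτ : IsTreeComponent F τ) {e : Sym2 V}
    (he : e ∈ m τ) : ∀ v ∈ e, v ∈ supp τ :=
  (mem_edgesIn.1 ((scheme_tree hm hE hF hτ).2.1 he)).2

/-- The interval `[F, top m F]` is a single set exactly when every component of `F` is fixed by `m`. -/
theorem top_eq_iff (hm : IsPartitionScheme G m) {F : Finset (Sym2 V)} (hE : F ⊆ G.edgeFinset)
    (hF : IsForest F) : top m F = F ↔ ∀ τ, IsTreeComponent F τ → m τ = τ := by
  constructor
  · intro h τ hτ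
    refine (scheme_tree hm hE hF hτ).1.antisymm' fun e he => ?_
    have heF : e ∈ F := h ▸ mem_top.2 ⟨τ, hτ, he⟩
    induction e with
    | h a b =>
      exact hτ.mem_of_mem_supp heF (Sym2.mem_mk_left a b)
        (mem_component_of_mem_scheme hm hE hF hτ he a (Sym2.mem_mk_left a b))
  · intro h
    refine (subset_top hm hE hF).antisymm' fun e he => ?_
    obtain ⟨τ, hτ, heτ⟩ := mem_top.1 he
    rw [h τ hτ] at heτ
    exact hτ.1 heτ

/-- If `F ⊆ A ⊆ top m F`, the components of `F` and of `A` have the same supports: the component `τ`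
of `F` grows into the component `A ∩ m τ` of `A`. -/
theorem component_of_interval (hm : IsPartitionScheme G m) {F A τ : Finset (Sym2 V)}
    (hE : F ⊆ G.edgeFinset) (hF : IsForest F) (hFA : F ⊆ A) (hA : A ⊆ top m F)
    (hτ : IsTreeComponent F τ) :
    IsTreeComponent A (A ∩ m τ) ∧ supp (A ∩ m τ) = supp τ := by
  have hsub : τ ⊆ A ∩ m τ :=
    Finset.subset_inter (hτ.1.trans hFA) (scheme_tree hm hE hF hτ).1
  have hsupp : supp (A ∩ m τ) = supp τ := by
    ext v
    constructor
    · intro hv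
      obtain ⟨e, he, hve⟩ := mem_supp.1 hv
      exact mem_component_of_mem_scheme hm hE hF hτ (Finset.mem_inter.1 he).2 v hve
    · intro hv
      obtain ⟨e, he, hve⟩ := mem_supp.1 hv
      exact mem_supp.2 ⟨e, hsub he, hve⟩
  refine ⟨isTreeComponent_of Finset.inter_subset_left (hτ.2.1.mono hsub) ?_ ?_, hsupp⟩
  · rw [hsupp]
    exact hτ.2.2.1.mono hsub
  · intro e heA hne v hv hs
    rw [hsupp] at hs
    obtain ⟨τ', hτ', heτ'⟩ := mem_top.1 (hA heA)
    have hv' := mem_component_of_mem_scheme hm hE hF hτ' heτ' v hv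
    have := hτ.eq_of_meet hτ' hs hv'
    subst this
    exact hne (Finset.mem_inter.2 ⟨heA, heτ'⟩)

/-- Half of the uniqueness of the forest whose interval contains `A`; the other half is the same
statement with `F` and `F'` exchanged. -/
theorem interval_subset (hm : IsPartitionScheme G m) {F F' A : Finset (Sym2 V)}
    (hAE : A ⊆ G.edgeFinset)
    (hF : IsForest F) (hFA : F ⊆ A) (hA : A ⊆ top m F)
    (hF' : IsForest F') (hFA' : F' ⊆ A) (hA' : A ⊆ top m F') : F ⊆ F' := by
  intro e he
  have hE := hFA.trans hAE
  have hE' := hFA'.trans hAE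
  obtain ⟨τ, hτ, heτ⟩ := exists_component he
  obtain ⟨τ', hτ', heτ'⟩ := mem_top.1 (hA' (hFA he))
  obtain ⟨hκ, hs⟩ := component_of_interval hm hE hF hFA hA hτ
  obtain ⟨hκ', hs'⟩ := component_of_interval hm hE' hF' hFA' hA' hτ'
  have hsub := (scheme_tree hm hE hF hτ).1
  have hsub' := (scheme_tree hm hE' hF' hτ').1
  have heq : A ∩ m τ = A ∩ m τ' := hκ.eq_of_mem hκ'
    (Finset.mem_inter.2 ⟨hFA he, hsub heτ⟩) (Finset.mem_inter.2 ⟨hFA he, heτ'⟩)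
  have : τ = τ' := by
    refine (scheme_existsUnique hm hAE hκ).unique ⟨?_, ?_, ?_⟩ ⟨?_, ?_, ?_⟩
    · rw [hs]; exact isSpanningTree_iff.2 ⟨hτ.isCSS hE, hF.subset hτ.1⟩
    · exact Finset.subset_inter (hτ.1.trans hFA) hsub
    · exact Finset.inter_subset_right
    · rw [heq, hs']; exact isSpanningTree_iff.2 ⟨hτ'.isCSS hE', hF'.subset hτ'.1⟩
    · rw [heq]; exact Finset.subset_inter (hτ'.1.trans hFA') hsub'
    · rw [heq]; exact Finset.inter_subset_right
  subst this
  exact hτ'.1 heτ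

/-- Every edge set `A` lies in the interval of some forest, namely the union over the components `κ`
of `A` of the tree `t κ` that the scheme assigns to `κ`. -/
theorem interval_exists (hm : IsPartitionScheme G m) {A : Finset (Sym2 V)}
    (hAE : A ⊆ G.edgeFinset) : ∃ F, IsForest F ∧ F ⊆ A ∧ A ⊆ top m F := by
  have hex : ∀ κ, ∃ τ, IsTreeComponent A κ →
      IsSpanningTree G (supp κ) τ ∧ τ ⊆ κ ∧ κ ⊆ m τ := by
    intro κ
    by_cases h : IsTreeComponent A κ
    · obtain ⟨τ, hτ, -⟩ := scheme_existsUnique hm hAE h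
      exact ⟨τ, fun _ => hτ⟩
    · exact ⟨∅, fun h' => absurd h' h⟩
  choose t ht using hex
  have mem_F : ∀ e, e ∈ (Finset.univ.filter (fun κ => IsTreeComponent A κ)).biUnion t ↔
      ∃ κ, IsTreeComponent A κ ∧ e ∈ t κ := by
    intro e; simp
  set F := (Finset.univ.filter (fun κ => IsTreeComponent A κ)).biUnion t with hF
  have hsupp : ∀ κ, IsTreeComponent A κ → supp (t κ) = supp κ := fun κ hκ =>
    supp_eq_of_isCSS (two_le_card_supp (hκ.1.trans hAE) hκ.2.1) (ht κ hκ).1.1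
  have hcomp : ∀ κ, IsTreeComponent A κ → IsTreeComponent F (t κ) := by
    intro κ hκ
    refine isTreeComponent_of (fun e he => (mem_F e).2 ⟨κ, hκ, he⟩) ?_ ?_ ?_
    · have h2 := two_le_card_supp (hκ.1.trans hAE) hκ.2.1
      have := (ht κ hκ).1.2
      exact Finset.card_pos.1 (by omega)
    · rw [hsupp κ hκ]; exact (ht κ hκ).1.1.2
    · intro e heF hne v hv hs
      obtain ⟨κ', hκ', heκ'⟩ := (mem_F e).1 heF
      rw [hsupp κ hκ] at hs
      have := hκ.eq_of_meet hκ' hs (mem_supp.2 ⟨e, (ht κ' hκ').2.1 heκ', hv⟩)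
      subst this
      exact hne heκ'
  refine ⟨F, isForest_of_components ?_, ?_, ?_⟩
  · intro τ hτ
    obtain ⟨e, he⟩ := hτ.2.1
    obtain ⟨κ, hκ, heκ⟩ := (mem_F e).1 (hτ.1 he)
    rw [hτ.eq_of_mem (hcomp κ hκ) he heκ]
    exact (isSpanningTree_iff.1 (ht κ hκ).1).2
  · intro e he
    obtain ⟨κ, hκ, heκ⟩ := (mem_F e).1 he
    exact hκ.1 ((ht κ hκ).2.1 heκ)
  · intro e he
    obtain ⟨κ, hκ, heκ⟩ := exists_component he
    exact mem_top.2 ⟨t κ, hcomp κ hκ, (ht κ hκ).2.2 heκ⟩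

end

/-! ### Edge-constant colourings -/

/-- The colouring `f` takes a single value on the endpoints of `e`. -/
def Mono {K : Type*} (f : V → K) (e : Sym2 V) : Prop :=
  ∀ x ∈ e, ∀ y ∈ e, f x = f y

theorem mono_mk {K : Type*} {f : V → K} {a b : V} : Mono f s(a, b) ↔ f a = f b := by
  constructor
  · intro h
    exact h a (Sym2.mem_mk_left a b) b (Sym2.mem_mk_right a b)
  · intro h x hx y hy
    rcases Sym2.mem_iff.1 hx with rfl | rfl <;> rcases Sym2.mem_iff.1 hy with rfl | rfl <;>
      simp [h]

theorem eq_of_reachable {K : Type*} {f : V → K} {F : Finset (Sym2 V)} (hf : ∀ e ∈ F, Mono f e)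
    {x y : V} (h : (SimpleGraph.fromEdgeSet (F : Set (Sym2 V))).Reachable x y) : f x = f y :=
  reach_closed (P := fun u => f x = f u) (fun _ _ hab ha => ha.trans (mono_mk.1 (hf _ hab))) h rfl

section

variable [Fintype V] [DecidableEq V]

/-- The number of colourings `V → Fin q` that are constant on every edge of `A`, that is, `q` to
the number of connected components of `(V, A)`. -/
noncomputable def monoCount (q : ℕ) (A : Finset (Sym2 V)) : ℕ :=
  (Finset.univ.filter (fun f : V → Fin q => ∀ e ∈ A, Mono f e)).card

/-- Joining two different components divides the number of edge-constant colourings by `q`: the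
colours of the component of `x` in `F` are shifted by an arbitrary amount. -/
theorem monoCount_insert {q : ℕ} [NeZero q] {F : Finset (Sym2 V)} {x y : V}
    (h : ¬ (SimpleGraph.fromEdgeSet (F : Set (Sym2 V))).Reachable x y) :
    monoCount q (insert s(x, y) F) * q = monoCount q F := by
  set r := SimpleGraph.fromEdgeSet (F : Set (Sym2 V)) with hr
  have hstep : ∀ a b, s(a, b) ∈ F → (r.Reachable x a ↔ r.Reachable x b) := by
    intro a b hab
    by_cases hne : a = b
    · rw [hne]
    · have := (adj_of_mem hab hne).reachable
      exact ⟨fun h => h.trans this, fun h => h.trans this.symm⟩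
  have hx : r.Reachable x x := SimpleGraph.Reachable.refl x
  unfold monoCount
  have hprod : ∀ S : Finset (V → Fin q),
      S.card * q = (S ×ˢ (Finset.univ : Finset (Fin q))).card := by
    intro S
    rw [Finset.card_product, Finset.card_univ, Fintype.card_fin]
  rw [hprod]
  refine Finset.card_nbij'
    (fun p v => if r.Reachable x v then p.1 v + p.2 else p.1 v)
    (fun g => (fun v => if r.Reachable x v then g v - (g x - g y) else g v, g x - g y))
    ?_ ?_ ?_ ?_
  · rintro ⟨f, c⟩ hf
    simp only [Finset.coe_product, Set.mem_prod, Finset.mem_coe, Finset.mem_filter,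
      Finset.mem_univ, true_and, and_true] at hf ⊢
    intro e
    induction e with
    | h a b =>
      intro hab
      have := mono_mk.1 (hf _ (Finset.mem_insert_of_mem hab))
      rw [mono_mk]
      simp only [hstep a b hab, this]
  · intro g hg
    simp only [Finset.coe_product, Set.mem_prod, Finset.mem_coe, Finset.mem_filter,
      Finset.mem_univ, true_and, and_true] at hg ⊢
    intro e
    induction e with
    | h a b =>
      intro hab
      rw [mono_mk]
      rcases Finset.mem_insert.1 hab with heq | hab
      · have key : (if r.Reachable x x then g x - (g x - g y) else g x) =
            (if r.Reachable x y then g y - (g x - g y) else g y) := by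
          rw [if_pos hx, if_neg h]; abel
        rcases Sym2.eq_iff.1 heq with ⟨rfl, rfl⟩ | ⟨rfl, rfl⟩
        · exact key
        · exact key.symm
      · simp only [hstep a b hab, mono_mk.1 (hg _ hab)]
  · rintro ⟨f, c⟩ hf
    simp only [Finset.coe_product, Set.mem_prod, Finset.mem_coe, Finset.mem_filter,
      Finset.mem_univ, true_and, and_true] at hf
    have hxy := mono_mk.1 (hf _ (Finset.mem_insert_self _ _))
    have hc : f x + c - f y = c := by rw [hxy]; abel
    simp only [if_pos hx, if_neg h, hc, Prod.mk.injEq, and_true]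
    funext v
    by_cases hv : r.Reachable x v
    · simp [hv]
    · simp [hv]
  · intro g _
    funext v
    by_cases hv : r.Reachable x v
    · simp [hv]
    · simp [hv]

/-- A forest `F` has `|V| - |F|` connected components, stated through colourings and without
subtraction. -/
theorem IsForest.monoCount_mul {q : ℕ} [NeZero q] {F : Finset (Sym2 V)} :
    IsForest F → (∀ a b, s(a, b) ∈ F → a ≠ b) →
    monoCount q F * q ^ F.card = q ^ Fintype.card V := by
  induction F using Finset.induction_on with
  | empty => intro _ _; simp [monoCount]
  | insert e F he ih =>
    induction e with
    | h x y =>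
    intro hF hl
    have hbr := SimpleGraph.isAcyclic_iff_forall_adj_isBridge.1 hF
      (adj_of_mem (Finset.mem_insert_self s(x, y) F) (hl x y (Finset.mem_insert_self _ _)))
    have hnr : ¬ (SimpleGraph.fromEdgeSet (F : Set (Sym2 V))).Reachable x y := by
      refine fun h => SimpleGraph.isBridge_iff.1 hbr (h.mono ?_)
      intro a b hab
      have hmem := adj_mem hab
      rw [SimpleGraph.deleteEdges_adj]
      refine ⟨adj_of_mem (Finset.mem_insert_of_mem hmem) hab.ne, ?_⟩
      rintro heq
      rw [Set.mem_singleton_iff] at heq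
      exact he (heq ▸ hmem)
    rw [Finset.card_insert_of_notMem he, pow_succ', ← mul_assoc, monoCount_insert hnr]
    exact ih (hF.subset (Finset.subset_insert _ _))
      (fun a b hab => hl a b (Finset.mem_insert_of_mem hab))

/-! ### Assembling the expansion -/

/-- Whitney's subgraph expansion, by inclusion–exclusion over the monochromatic edges. -/
theorem card_coloring_eq (G : SimpleGraph V) [DecidableRel G.Adj] (q : ℕ) :
    (Nat.card (G.Coloring (Fin q)) : ℤ) =
      ∑ A ∈ G.edgeFinset.powerset, (-1) ^ A.card * (monoCount q A : ℤ) := by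
  have hcard : Nat.card (G.Coloring (Fin q)) =
      (Finset.univ.filter (fun f : V → Fin q => G.edgeFinset.filter (Mono f) = ∅)).card := by
    rw [← Fintype.card_subtype, ← Nat.card_eq_fintype_card]
    refine Nat.card_congr ⟨fun c => ⟨c, ?_⟩, fun f => SimpleGraph.Coloring.mk f.1 ?_, ?_, ?_⟩
    · rw [Finset.filter_eq_empty_iff]
      intro e
      induction e with
      | h a b =>
        intro hab hm
        rw [SimpleGraph.mem_edgeFinset, SimpleGraph.mem_edgeSet] at hab
        exact c.valid hab (mono_mk.1 hm)
    · intro a b hab heq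
      refine (Finset.filter_eq_empty_iff.1 f.2) (x := s(a, b)) ?_ (mono_mk.2 heq)
      rwa [SimpleGraph.mem_edgeFinset, SimpleGraph.mem_edgeSet]
    · intro c; rfl
    · intro f; rfl
  rw [hcard, Finset.card_filter]
  push_cast
  simp_rw [monoCount, Finset.card_filter]
  push_cast
  simp_rw [Finset.mul_sum]
  rw [Finset.sum_comm]
  refine Finset.sum_congr rfl fun f _ => ?_
  rw [← Finset.sum_powerset_neg_one_pow_card]
  simp_rw [mul_ite, mul_one, mul_zero]
  rw [← Finset.sum_filter]
  refine Finset.sum_congr ?_ fun _ _ => rfl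
  ext A
  simp only [Finset.mem_powerset, Finset.mem_filter, Finset.subset_iff]
  exact ⟨fun h => ⟨fun e he => (h he).1, fun e he => (h he).2⟩, fun h e he => ⟨h.1 he, h.2 e he⟩⟩

variable {G : SimpleGraph V} [DecidableRel G.Adj] {m : Finset (Sym2 V) → Finset (Sym2 V)}

/-- All edge sets in the interval `[F, top m F]` have the same connected components as `F`, hence
the same edge-constant colourings. -/
theorem monoCount_interval (hm : IsPartitionScheme G m) {F A : Finset (Sym2 V)} (q : ℕ)
    (hE : F ⊆ G.edgeFinset) (hF : IsForest F) (hFA : F ⊆ A) (hA : A ⊆ top m F) :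
    monoCount q A = monoCount q F := by
  unfold monoCount
  congr 1
  refine Finset.filter_congr fun f _ => ⟨fun h e he => h e (hFA he), fun h e he => ?_⟩
  obtain ⟨τ, hτ, heτ⟩ := mem_top.1 (hA he)
  have hs := mem_component_of_mem_scheme hm hE hF hτ heτ
  intro x hx y hy
  exact eq_of_reachable (fun e he => h e (hτ.1 he)) (hτ.2.2.1.reachable (hs x hx) (hs y hy))

omit [Fintype V] in
/-- The signed sum over a Boolean interval vanishes unless the interval is a single set. -/
theorem sum_interval {F M : Finset (Sym2 V)} (h : F ⊆ M) :
    ∑ A ∈ Finset.Icc F M, (-1 : ℤ) ^ A.card = if M = F then (-1) ^ F.card else 0 := by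
  rw [Finset.Icc_eq_image_powerset h, Finset.sum_image]
  · have hc : ∀ B ∈ (M \ F).powerset, (-1 : ℤ) ^ (F ∪ B).card = (-1) ^ F.card * (-1) ^ B.card := by
      intro B hB
      rw [Finset.card_union_of_disjoint, pow_add]
      exact Finset.disjoint_of_subset_right (Finset.mem_powerset.1 hB) Finset.disjoint_sdiff
    rw [Finset.sum_congr rfl hc, ← Finset.mul_sum, Finset.sum_powerset_neg_one_pow_card]
    have : M \ F = ∅ ↔ M = F := by
      rw [Finset.sdiff_eq_empty_iff_subset]
      exact ⟨fun h' => h'.antisymm h, fun h' => h'.le⟩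
    simp only [this]
    split_ifs <;> simp
  · intro B hB C hC hBC
    have hd : ∀ B ∈ (M \ F).powerset, (F ∪ B) \ F = B := by
      intro B hB
      rw [Finset.union_sdiff_cancel_left]
      exact Finset.disjoint_of_subset_right (Finset.mem_powerset.1 hB) Finset.disjoint_sdiff
    rw [← hd B hB, ← hd C hC]
    exact congrArg (· \ F) hBC

/-- Grouping the edge sets by the interval that contains them leaves only the forests whose
interval is a single set. -/
theorem sum_eq_sum_forests (hm : IsPartitionScheme G m) (q : ℕ) :
    ∑ A ∈ G.edgeFinset.powerset, (-1) ^ A.card * (monoCount q A : ℤ) =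
      ∑ F ∈ G.edgeFinset.powerset.filter
        (fun F => IsForest F ∧ ∀ τ, IsTreeComponent F τ → m τ = τ),
        (-1) ^ F.card * (monoCount q F : ℤ) := by
  have hex : ∀ A : Finset (Sym2 V), ∃ F, A ⊆ G.edgeFinset →
      IsForest F ∧ F ⊆ A ∧ A ⊆ top m F := by
    intro A
    by_cases h : A ⊆ G.edgeFinset
    · obtain ⟨F, hF⟩ := interval_exists hm h
      exact ⟨F, fun _ => hF⟩
    · exact ⟨∅, fun h' => absurd h' h⟩
  choose Φ hΦ using hex
  have hmaps : ∀ A ∈ G.edgeFinset.powerset, Φ A ∈ G.edgeFinset.powerset.filter IsForest := by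
    intro A hA
    have hA := Finset.mem_powerset.1 hA
    exact Finset.mem_filter.2 ⟨Finset.mem_powerset.2 ((hΦ A hA).2.1.trans hA), (hΦ A hA).1⟩
  rw [← Finset.sum_fiberwise_of_maps_to hmaps, ← Finset.filter_filter,
    Finset.sum_filter (s := G.edgeFinset.powerset.filter IsForest)]
  refine Finset.sum_congr rfl fun F hF => ?_
  obtain ⟨hE, hF⟩ := Finset.mem_filter.1 hF
  have hE := Finset.mem_powerset.1 hE
  have hfib : G.edgeFinset.powerset.filter (fun A => Φ A = F) = Finset.Icc F (top m F) := by
    ext A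
    rw [Finset.mem_filter, Finset.mem_powerset, Finset.mem_Icc]
    constructor
    · rintro ⟨hA, rfl⟩
      exact (hΦ A hA).2
    · rintro ⟨h₁, h₂⟩
      have hA : A ⊆ G.edgeFinset := h₂.trans (top_subset hm hE hF)
      obtain ⟨g₀, g₁, g₂⟩ := hΦ A hA
      exact ⟨hA, (interval_subset hm hA g₀ g₁ g₂ hF h₁ h₂).antisymm
        (interval_subset hm hA hF h₁ h₂ g₀ g₁ g₂)⟩
  rw [hfib]
  have hc : ∀ A ∈ Finset.Icc F (top m F),
      (-1 : ℤ) ^ A.card * (monoCount q A : ℤ) = (-1) ^ A.card * (monoCount q F : ℤ) := by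
    intro A hA
    obtain ⟨h₁, h₂⟩ := Finset.mem_Icc.1 hA
    rw [monoCount_interval hm q hE hF h₁ h₂]
  rw [Finset.sum_congr rfl hc, ← Finset.sum_mul, sum_interval (subset_top hm hE hF)]
  simp only [top_eq_iff hm hE hF, ite_mul, zero_mul]

end

/-- The chromatic polynomial as a sum over `m`-fixed forests, for any partition scheme `m`. -/
theorem chromatic_eq_sum_scheme_forests [Fintype V] [DecidableEq V] (G : SimpleGraph V)
    [DecidableRel G.Adj] (m : Finset (Sym2 V) → Finset (Sym2 V))
    (hm : IsPartitionScheme G m) (q : ℕ) (hq : 0 < q) :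
    (Nat.card (G.Coloring (Fin q)) : ℚ) =
      (q : ℚ) ^ Fintype.card V *
        ∑ F ∈ G.edgeFinset.powerset.filter
            (fun F => IsForest F ∧ ∀ τ, IsTreeComponent F τ → m τ = τ),
          (-1 / (q : ℚ)) ^ F.card := by
  have : NeZero q := ⟨hq.ne'⟩
  have hq0 : (q : ℚ) ≠ 0 := by exact_mod_cast hq.ne'
  have h := (card_coloring_eq G q).trans (sum_eq_sum_forests hm q)
  have h' := congrArg (Int.cast : ℤ → ℚ) h
  push_cast at h'
  rw [h', Finset.mul_sum]
  refine Finset.sum_congr rfl fun F hF => ?_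
  obtain ⟨hE, hF, -⟩ := Finset.mem_filter.1 hF
  have hcount : (monoCount q F : ℚ) * (q : ℚ) ^ F.card = (q : ℚ) ^ Fintype.card V := by
    exact_mod_cast hF.monoCount_mul (q := q)
      (fun a b hab => ne_of_mem (Finset.mem_powerset.1 hE) hab)
  rw [← hcount, div_pow]
  field_simp

end BC
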